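/- Let k, j : ℕ with 2 ≤ j ≤ k and let f := (Y − X^j)² − X^(2k+1) ∈ R := MvPolynomial ℂ (Fin 2) (a curve with an A_{2k}-singularity at the origin). Then A ⧸ Ideal.span {ι f, ι(i_f)} is a finite-dimensional ℂ-vector space with Module.finrank ℂ (A ⧸ Ideal.span {ι f, ι(i_f)}) = 6k + 2j − 1; moreover, if 3 ≤ j, then A ⧸ Ideal.span {ι f, ι(v_f)} is finite-dimensional with Module.finrank ℂ (A ⧸ Ideal.span {ι f, ι(v_f)}) = 12k + 2j. -/

import Mathlib

open MvPolynomial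

noncomputable section

/-- Partial derivative with respect to the first variable `X`. -/
def dx (f : MvPolynomial (Fin 2) ℂ) : MvPolynomial (Fin 2) ℂ := pderiv 0 f

/-- Partial derivative with respect to the second variable `Y`. -/
def dy (f : MvPolynomial (Fin 2) ℂ) : MvPolynomial (Fin 2) ℂ := pderiv 1 f

/-- The inflection polynomial `i_f = f_y²·f_xx − 2·f_x·f_y·f_xy + f_x²·f_yy`. -/
def infl (f : MvPolynomial (Fin 2) ℂ) : MvPolynomial (Fin 2) ℂ :=
  (dy f) ^ 2 * dx (dx f) - 2 * dx f * dy f * dy (dx f) + (dx f) ^ 2 * dy (dy f)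

/-- The vertex polynomial
`v_f = (f_x² + f_y²)(f_x³ f_yyy − 3 f_x² f_y f_xyy + 3 f_x f_y² f_xxy − f_y³ f_xxx)
      − 3((f_x² − f_y²) f_xy − f_x f_y (f_xx − f_yy)) · i_f`. -/
def vert (f : MvPolynomial (Fin 2) ℂ) : MvPolynomial (Fin 2) ℂ :=
  ((dx f) ^ 2 + (dy f) ^ 2) *
      ((dx f) ^ 3 * dy (dy (dy f)) - 3 * (dx f) ^ 2 * dy f * dy (dy (dx f)) +
        3 * dx f * (dy f) ^ 2 * dy (dx (dx f)) - (dy f) ^ 3 * dx (dx (dx f))) -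
    3 * (((dx f) ^ 2 - (dy f) ^ 2) * dy (dx f) - dx f * dy f * (dx (dx f) - dy (dy f))) *
      infl f

/-- The canonical map from polynomials to formal power series in two variables. -/
def ι : MvPolynomial (Fin 2) ℂ →+* MvPowerSeries (Fin 2) ℂ :=
  MvPolynomial.coeToMvPowerSeries.ringHom

/-- The local intersection number at the origin of the curves `g = 0` and `h = 0`:
the `ℂ`-dimension of `ℂ⟦x,y⟧/⟨g,h⟩`. -/
def interMult (g h : MvPolynomial (Fin 2) ℂ) : ℕ :=
  Module.finrank ℂ (MvPowerSeries (Fin 2) ℂ ⧸ Ideal.span {ι g, ι h})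

end

/-!
The curve is the image of `t ↦ (t², t^(2j) + t^(2k+1))`, and substituting this parametrisation is a
ring homomorphism `ℂ⟦x,y⟧ → ℂ⟦t⟧` with kernel `(f)` (Weierstrass division by `f`, then comparison of
even and odd parts) and with finite-dimensional cokernel. Multiplication by the pullback of `g` has
the same index on the image as on `ℂ⟦t⟧`, so `dim ℂ⟦x,y⟧/(f, g)` is the order of that pullback.

Along the curve `(f_x, f_y) = t^(2k) (-ẏ, ẋ)`. Differentiating this relation, `i_f` pulls back to
`-t^(6k) (ẋÿ - ẍẏ)` and `v_f` to `t^(12k)` times the numerator of the derivative of the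
curvature. The remaining factors have orders `2j - 1` and, for `j ≠ 2`, `2j`.
-/

open scoped PowerSeries

section Length

theorem length_quotient_eq_length_quotient_comap_add {R M N : Type*} [Ring R] [AddCommGroup M]
    [Module R M] [AddCommGroup N] [Module R N] (f : M →ₗ[R] N) {q : Submodule R N}
    (hq : q ≤ LinearMap.range f) :
    Module.length R (N ⧸ q) =
      Module.length R (M ⧸ q.comap f) + Module.length R (N ⧸ LinearMap.range f) := by
  refine Module.length_eq_add_of_exact (Submodule.mapQ _ q f le_rfl) (Submodule.factor hq) ?_
    (Submodule.factor_surjective hq) ?_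
  · rw [← LinearMap.ker_eq_bot, Submodule.ker_mapQ, Submodule.mkQ_map_self]
  · rw [LinearMap.exact_iff, Submodule.ker_mapQ, Submodule.comap_id, Submodule.range_mapQ]

theorem length_quotient_comap_map_range {R S T : Type*} [Ring R] [AddCommGroup S] [Module R S]
    [AddCommGroup T] [Module R T] (φ : S →ₗ[R] T) {m : T →ₗ[R] T} (hm : Function.Injective m)
    (hmφ : (LinearMap.range φ).map m ≤ LinearMap.range φ)
    (hcodim : Module.length R (T ⧸ LinearMap.range φ) ≠ ⊤) :
    Module.length R (S ⧸ ((LinearMap.range φ).map m).comap φ) =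
      Module.length R (T ⧸ LinearMap.range m) := by
  have through_range := length_quotient_eq_length_quotient_comap_add φ hmφ
  have through_mul := length_quotient_eq_length_quotient_comap_add m
    (LinearMap.map_le_range (f := m) (p := LinearMap.range φ))
  rw [Submodule.comap_map_eq_of_injective hm] at through_mul
  rw [through_range, add_comm] at through_mul
  exact ENat.add_right_injective_of_ne_top hcodim through_mul

theorem finite_and_finrank_eq_of_length_eq {K M : Type*} [DivisionRing K] [AddCommGroup M]
    [Module K M] {n : ℕ} (h : Module.length K M = n) :
    Module.Finite K M ∧ Module.finrank K M = n := by
  have hrank : Module.rank K M = n := by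
    simpa [Module.length_eq_rank] using h
  exact ⟨Module.finite_of_rank_eq_nat hrank, Module.finrank_eq_of_rank_eq hrank⟩

variable {K S T : Type*} [CommRing K] [CommRing S] [Algebra K S] [CommRing T] [Algebra K T]

theorem length_quotient_ker_sup_span_singleton (φ : S →ₐ[K] T) {g : S}
    (hg : φ g ∈ nonZeroDivisors T)
    (hcodim : Module.length K (T ⧸ LinearMap.range φ.toLinearMap) ≠ ⊤) :
    Module.length K (S ⧸ RingHom.ker φ ⊔ Ideal.span {g}) =
      Module.length K (T ⧸ Ideal.span {φ g}) := by
  set m := LinearMap.mulLeft K (φ g)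
  have hm : Function.Injective m := fun a b h ↦ (mul_cancel_left_mem_nonZeroDivisors hg).mp h
  have map_range : (LinearMap.range φ.toLinearMap).map m ≤ LinearMap.range φ.toLinearMap := by
    rintro _ ⟨_, ⟨s, rfl⟩, rfl⟩
    exact ⟨g * s, map_mul φ g s⟩
  have comap_eq : ((LinearMap.range φ.toLinearMap).map m).comap φ.toLinearMap =
      (RingHom.ker φ ⊔ Ideal.span {g}).restrictScalars K := by
    ext s
    simp only [Submodule.mem_comap, Submodule.mem_map, LinearMap.mem_range,
      exists_exists_eq_and, Submodule.restrictScalars_mem, Submodule.mem_sup,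
      Ideal.mem_span_singleton']
    constructor
    · rintro ⟨b, hb⟩
      refine ⟨s - b * g, ?_, b, sub_add_cancel _ _⟩
      rw [RingHom.mem_ker, map_sub, sub_eq_zero, mul_comm, map_mul]
      exact hb.symm
    · rintro ⟨a, ha, b, rfl⟩
      refine ⟨b, ?_⟩
      simp [m, RingHom.mem_ker.mp ha, mul_comm]
  have range_eq : LinearMap.range m = (Ideal.span {φ g}).restrictScalars K := by
    ext t
    simp [m, Ideal.mem_span_singleton, dvd_def, eq_comm]
  have := length_quotient_comap_map_range φ.toLinearMap hm map_range hcodim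
  rwa [comap_eq, range_eq] at this

end Length

section Order

variable {K : Type*} [Field K]

theorem length_quotient_span_X_pow (n : ℕ) :
    Module.length K (K⟦X⟧ ⧸ Ideal.span {(PowerSeries.X : K⟦X⟧) ^ n}) = n := by
  let firstCoeffs : K⟦X⟧ →ₗ[K] Fin n → K := LinearMap.pi fun i ↦ PowerSeries.coeff (i : ℕ)
  have surj : Function.Surjective firstCoeffs := fun v ↦
    ⟨PowerSeries.mk fun i ↦ if h : i < n then v ⟨i, h⟩ else 0, by ext i; simp [firstCoeffs]⟩
  have ker_eq : LinearMap.ker firstCoeffs =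
      (Ideal.span {(PowerSeries.X : K⟦X⟧) ^ n}).restrictScalars K := by
    ext p
    simp [firstCoeffs, Ideal.mem_span_singleton, PowerSeries.X_pow_dvd_iff, funext_iff,
      Fin.forall_iff]
  have e := firstCoeffs.quotKerEquivOfSurjective surj
  rw [ker_eq] at e
  exact e.length_eq.trans (by simp [Module.length_eq_finrank])

theorem length_quotient_span_singleton_eq_order {g : K⟦X⟧} (hg : g ≠ 0) :
    Module.length K (K⟦X⟧ ⧸ Ideal.span {g}) = g.order := by
  have hassoc : Associated (PowerSeries.X ^ g.order.toNat) g :=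
    ⟨(PowerSeries.isUnit_divided_by_X_pow_order hg).unit, PowerSeries.X_pow_order_mul_divXPowOrder⟩
  rw [← Ideal.span_singleton_eq_span_singleton.mpr hassoc, length_quotient_span_X_pow,
    PowerSeries.coe_toNat_order hg]

theorem length_quotient_span_pair_eq_order {S : Type*} [CommRing S] [Algebra K S]
    {φ : S →ₐ[K] K⟦X⟧} {f g : S} (hker : RingHom.ker φ = Ideal.span {f})
    (hcodim : Module.length K (K⟦X⟧ ⧸ LinearMap.range φ.toLinearMap) ≠ ⊤) (hg : φ g ≠ 0) :
    Module.length K (S ⧸ Ideal.span {f, g}) = (φ g).order := by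
  rw [Ideal.span_insert, ← hker,
    length_quotient_ker_sup_span_singleton φ (mem_nonZeroDivisors_of_ne_zero hg) hcodim,
    length_quotient_span_singleton_eq_order hg]

end Order

section PlaneCurve

theorem pderiv_pderiv_comm {R σ : Type*} [CommRing R] (i j : σ) (p : MvPolynomial σ R) :
    pderiv i (pderiv j p) = pderiv j (pderiv i p) := by
  classical
  have bracket_eq_zero : ⁅pderiv (R := R) i, pderiv j⁆ = 0 :=
    derivation_ext fun l ↦ by
      rw [Derivation.commutator_apply, pderiv_X, pderiv_X, Pi.single_apply, Pi.single_apply]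
      split_ifs <;> simp
  exact sub_eq_zero.mp (DFunLike.congr_fun bracket_eq_zero p)

theorem derivation_aeval_eq_sum {R σ B : Type*} [CommRing R] [Fintype σ] [CommRing B]
    [Algebra R B] (D : Derivation R B B) (γ : σ → B) (p : MvPolynomial σ R) :
    D (aeval γ p) = ∑ i, aeval γ (pderiv i p) * D (γ i) := by
  classical
  induction p using MvPolynomial.induction_on with
  | C a => simp
  | add p q hp hq => simp only [map_add, hp, hq, add_mul, Finset.sum_add_distrib]
  | mul_X p i hp =>
    simp only [map_mul, Derivation.leibniz, hp, aeval_X, smul_eq_mul, pderiv_X, map_add, add_mul,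
      Finset.sum_add_distrib, Pi.single_apply, Finset.mul_sum]
    simp [apply_ite, mul_assoc]

section

variable {R B : Type*} [CommRing R] [CommRing B] [Algebra R B] (D : Derivation R B B)
  (γ : Fin 2 → B)

/-- `ẋÿ - ẍẏ` for a parametrised plane curve `γ = (x, y)` with derivative `D`: the numerator
of its curvature, whose zeros are the inflections. -/
noncomputable def paramInfl : B := D (γ 0) * D (D (γ 1)) - D (D (γ 0)) * D (γ 1)

/-- The numerator of the derivative of the curvature of a parametrised plane curve `γ = (x, y)` with
derivative `D`, whose zeros are the vertices. -/
noncomputable def paramVert : B :=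
  (D (γ 0) ^ 2 + D (γ 1) ^ 2) * (D (γ 0) * D (D (D (γ 1))) - D (D (D (γ 0))) * D (γ 1)) -
    3 * (D (γ 0) * D (D (γ 0)) + D (γ 1) * D (D (γ 1))) * paramInfl D γ

end

variable {B : Type*} [CommRing B] [Algebra ℂ B] {D : Derivation ℂ B B} {γ : Fin 2 → B}
  {f : MvPolynomial (Fin 2) ℂ} {c : B}

theorem derivation_aeval (p : MvPolynomial (Fin 2) ℂ) :
    D (aeval γ p) = aeval γ (dx p) * D (γ 0) + aeval γ (dy p) * D (γ 1) := by
  rw [derivation_aeval_eq_sum, Fin.sum_univ_two, dx, dy]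

theorem dx_dy (p : MvPolynomial (Fin 2) ℂ) : dx (dy p) = dy (dx p) := pderiv_pderiv_comm 0 1 p

theorem aeval_infl (hx : aeval γ (dx f) = -(c * D (γ 1)))
    (hy : aeval γ (dy f) = c * D (γ 0)) : aeval γ (infl f) = -(c ^ 3 * paramInfl D γ) := by
  have deriv_hx := congrArg D hx
  have deriv_hy := congrArg D hy
  simp only [derivation_aeval, map_neg, Derivation.leibniz, smul_eq_mul, dx_dy]
    at deriv_hx deriv_hy
  simp only [infl, paramInfl, map_add, map_sub, map_mul, map_pow, map_ofNat, hx, hy]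
  linear_combination c ^ 2 * D (γ 0) * deriv_hx + c ^ 2 * D (γ 1) * deriv_hy

theorem aeval_vert (hx : aeval γ (dx f) = -(c * D (γ 1)))
    (hy : aeval γ (dy f) = c * D (γ 0)) : aeval γ (vert f) = c ^ 6 * paramVert D γ := by
  have deriv_hx := congrArg D hx
  have deriv_hy := congrArg D hy
  have deriv2_hx := congrArg D deriv_hx
  have deriv2_hy := congrArg D deriv_hy
  simp only [derivation_aeval, map_neg, map_add, Derivation.leibniz, smul_eq_mul, dx_dy]
    at deriv_hx deriv_hy deriv2_hx deriv2_hy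
  simp only [vert, aeval_infl hx hy, paramVert, paramInfl, map_add, map_sub, map_mul, map_pow,
    map_ofNat, hx, hy]
  -- The second derivatives produce the third partials of `f`; the two combinations of first
  -- derivatives cancel the second partials that come with them.
  linear_combination
    -c ^ 5 * (D (γ 0) ^ 2 + D (γ 1) ^ 2) * (D (γ 0) * deriv2_hx + D (γ 1) * deriv2_hy) +
    c ^ 5 * (D (γ 0) * D (D (γ 0)) + D (γ 1) * D (D (γ 1))) *
      (D (γ 0) * deriv_hx + D (γ 1) * deriv_hy) +
    2 * c ^ 5 * (D (γ 0) * D (D (γ 1)) - D (D (γ 0)) * D (γ 1)) *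
      (D (γ 1) * deriv_hx - D (γ 0) * deriv_hy)

end PlaneCurve

section NestedPowerSeries

theorem optionEquivLeft_rename_some {R σ : Type*} [CommSemiring R] (p : MvPowerSeries σ R) :
    MvPowerSeries.optionEquivLeft σ R (MvPowerSeries.rename Function.Embedding.some p) =
      PowerSeries.C p := by
  ext n x
  rw [MvPowerSeries.coeff_coeff_optionEquivLeft, PowerSeries.coeff_C]
  split_ifs with hn
  · have optionElim_eq : x.optionElim n = x.embDomain Function.Embedding.some := by
      ext (_ | i)
      · simp [hn, Finsupp.embDomain_of_notMem_range]
      · exact (Finsupp.optionElim_apply_some ..).trans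
          (Finsupp.embDomain_apply_self Function.Embedding.some x i).symm
    rw [optionElim_eq, MvPowerSeries.coeff_embDomain_rename]
  · refine MvPowerSeries.coeff_rename_eq_zero _ p fun ⟨y, hy⟩ ↦ hn ?_
    have none_eq := DFunLike.congr_fun hy none
    rw [Finsupp.mapDomain_of_notMem_range _ _ (by simp)] at none_eq
    simpa using none_eq.symm

/-- Two-variable power series as power series in `X 1` whose coefficients are power series in `X 0`,
the form to which Weierstrass division in the variable `X 1` applies. -/
noncomputable def nestedEquiv (R : Type*) [CommSemiring R] :
    MvPowerSeries (Fin 2) R ≃ₐ[R] R⟦X⟧⟦X⟧ :=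
  (MvPowerSeries.renameEquiv R (finSuccEquivLast.trans finOneEquiv.optionCongr)).trans
    (MvPowerSeries.optionEquivLeft Unit R)

variable {R : Type*} [CommSemiring R]

theorem nestedEquiv_X_one : nestedEquiv R (MvPowerSeries.X 1) = PowerSeries.X := by
  change MvPowerSeries.optionEquivLeft Unit R (MvPowerSeries.rename _ (MvPowerSeries.X 1)) = _
  rw [MvPowerSeries.rename_X]
  exact MvPowerSeries.optionEquivLeft_X_none

theorem nestedEquiv_toMvPowerSeries (a : R⟦X⟧) :
    nestedEquiv R (a.toMvPowerSeries 0) = PowerSeries.C a := by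
  change MvPowerSeries.optionEquivLeft Unit R
    (MvPowerSeries.rename _ (MvPowerSeries.rename _ a)) = _
  rw [MvPowerSeries.rename_rename]
  exact optionEquivLeft_rename_some a

theorem nestedEquiv_X_zero : nestedEquiv R (MvPowerSeries.X 0) = PowerSeries.C PowerSeries.X := by
  rw [← PowerSeries.toMvPowerSeries_X, nestedEquiv_toMvPowerSeries]

end NestedPowerSeries

section WeierstrassDivision

variable {K : Type*} [Field K]

theorem isAdicComplete_maximalIdeal_powerSeries :
    IsAdicComplete (IsLocalRing.maximalIdeal K⟦X⟧) K⟦X⟧ := by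
  rw [PowerSeries.maximalIdeal_eq_span_X]
  infer_instance

theorem exists_eq_mul_add_eval₂_of_order_eq {F : MvPowerSeries (Fin 2) K} {n : ℕ}
    (hF : ((nestedEquiv K F).map (IsLocalRing.residue K⟦X⟧)).order = n)
    (h : MvPowerSeries (Fin 2) K) :
    ∃ (q : MvPowerSeries (Fin 2) K) (r : Polynomial K⟦X⟧), r.degree < n ∧
      h = F * q + r.eval₂ (PowerSeries.toMvPowerSeries 0).toRingHom (MvPowerSeries.X 1) := by
  have := isAdicComplete_maximalIdeal_powerSeries (K := K)
  have map_ne_zero : (nestedEquiv K F).map (IsLocalRing.residue K⟦X⟧) ≠ 0 :=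
    PowerSeries.order_finite_iff_ne_zero.mp (hF ▸ ENat.natCast_lt_top n)
  obtain ⟨q, r, degree_lt, eq_mul_add⟩ :=
    PowerSeries.exists_isWeierstrassDivision (nestedEquiv K h) map_ne_zero
  have nestedEquiv_eval₂ : nestedEquiv K
      (r.eval₂ (PowerSeries.toMvPowerSeries 0).toRingHom (MvPowerSeries.X 1)) = (r : K⟦X⟧⟦X⟧) := by
    rw [← Polynomial.eval₂_C_X_eq_coe]
    refine (Polynomial.hom_eval₂ r _ (nestedEquiv K).toRingHom _).trans ?_
    congr 1
    · ext1 a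
      exact nestedEquiv_toMvPowerSeries a
    · exact nestedEquiv_X_one
  refine ⟨(nestedEquiv K).symm q, r, ?_, (nestedEquiv K).injective ?_⟩
  · exact degree_lt.trans_eq (congrArg Nat.cast (congrArg ENat.toNat hF))
  · rw [eq_mul_add, map_add, map_mul, AlgEquiv.apply_symm_apply, nestedEquiv_eval₂]

end WeierstrassDivision

section EvenOdd

variable {R : Type*} [CommRing R] (a b : R⟦X⟧) (n : ℕ)

theorem coeff_two_mul_expand_two_add_X_mul_expand_two :
    (a.expand 2 two_ne_zero + PowerSeries.X * b.expand 2 two_ne_zero).coeff (2 * n) =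
      a.coeff n := by
  rw [map_add, PowerSeries.coeff_expand_mul, add_eq_left]
  cases n with
  | zero => simp
  | succ n =>
    rw [mul_add_one, PowerSeries.coeff_succ_X_mul,
      PowerSeries.coeff_expand_of_not_dvd _ _ _ (by omega)]

theorem coeff_two_mul_add_one_expand_two_add_X_mul_expand_two :
    (a.expand 2 two_ne_zero + PowerSeries.X * b.expand 2 two_ne_zero).coeff (2 * n + 1) =
      b.coeff n := by
  rw [map_add, PowerSeries.coeff_succ_X_mul, PowerSeries.coeff_expand_mul,
    PowerSeries.coeff_expand_of_not_dvd _ _ _ (by omega), zero_add]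

variable {a b}

theorem eq_zero_of_expand_two_add_X_mul_expand_two_eq_zero
    (h : a.expand 2 two_ne_zero + PowerSeries.X * b.expand 2 two_ne_zero = 0) :
    a = 0 ∧ b = 0 := by
  constructor <;> ext n
  · rw [← coeff_two_mul_expand_two_add_X_mul_expand_two a b, h, map_zero, map_zero]
  · rw [← coeff_two_mul_add_one_expand_two_add_X_mul_expand_two a b, h, map_zero, map_zero]

theorem exists_eq_expand_two_add_X_mul_expand_two (v : R⟦X⟧) :
    ∃ a b : R⟦X⟧, v = a.expand 2 two_ne_zero + PowerSeries.X * b.expand 2 two_ne_zero := by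
  refine ⟨.mk fun n ↦ v.coeff (2 * n), .mk fun n ↦ v.coeff (2 * n + 1), ?_⟩
  ext n
  obtain ⟨m, rfl | rfl⟩ := n.even_or_odd'
  · rw [coeff_two_mul_expand_two_add_X_mul_expand_two, PowerSeries.coeff_mk]
  · rw [coeff_two_mul_add_one_expand_two_add_X_mul_expand_two, PowerSeries.coeff_mk]

end EvenOdd

section CuspCurve

variable {R : Type*} [CommRing R] {j k : ℕ}

/-- The plane curve `(Y - X ^ j)² = X ^ (2k + 1)`, with an `A_{2k}`-singularity at the origin. -/
noncomputable def cuspCurve (R : Type*) [CommRing R] (j k : ℕ) : MvPolynomial (Fin 2) R :=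
  (X 1 - X 0 ^ j) ^ 2 - X 0 ^ (2 * k + 1)

/-- The parametrisation `t ↦ (t², t^(2j) + t^(2k+1))` of `cuspCurve`. -/
noncomputable def cuspParam (R : Type*) [CommRing R] (j k : ℕ) : Fin 2 → R⟦X⟧ :=
  ![PowerSeries.X ^ 2, PowerSeries.X ^ (2 * j) + PowerSeries.X ^ (2 * k + 1)]

theorem cuspParam_zero : cuspParam R j k 0 = PowerSeries.X ^ 2 := rfl

theorem cuspParam_one :
    cuspParam R j k 1 = PowerSeries.X ^ (2 * j) + PowerSeries.X ^ (2 * k + 1) := rfl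

theorem coe_cuspCurve : (cuspCurve R j k : MvPowerSeries (Fin 2) R) =
    (MvPowerSeries.X 1 - MvPowerSeries.X 0 ^ j) ^ 2 - MvPowerSeries.X 0 ^ (2 * k + 1) := by
  rw [← coeToMvPowerSeries.ringHom_apply]
  simp only [cuspCurve, map_sub, map_pow, coeToMvPowerSeries.ringHom_apply, coe_X]

theorem aeval_cuspParam_cuspCurve : aeval (cuspParam R j k) (cuspCurve R j k) = 0 := by
  simp only [cuspCurve, map_sub, map_pow, aeval_X, cuspParam_zero, cuspParam_one]
  ring

theorem hasSubst_cuspParam (hj : 0 < j) : MvPowerSeries.HasSubst (cuspParam R j k) := by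
  refine MvPowerSeries.hasSubst_of_constantCoeff_zero fun i ↦ ?_
  change PowerSeries.constantCoeff (cuspParam R j k i) = 0
  fin_cases i <;> simp [hj.ne', cuspParam]

/-- Restriction of a power series in two variables to the branch parametrised by `cuspParam`;
positivity of `j` makes the substitution well defined. -/
noncomputable def cuspPullback (R : Type*) [CommRing R] (k : ℕ) (hj : 0 < j) :
    MvPowerSeries (Fin 2) R →ₐ[R] R⟦X⟧ :=
  MvPowerSeries.substAlgHom (hasSubst_cuspParam hj (k := k))

theorem cuspPullback_coe (hj : 0 < j) (p : MvPolynomial (Fin 2) R) :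
    cuspPullback R k hj p = aeval (cuspParam R j k) p :=
  MvPowerSeries.substAlgHom_coe _ p

theorem cuspPullback_X (hj : 0 < j) (i : Fin 2) :
    cuspPullback R k hj (MvPowerSeries.X i) = cuspParam R j k i :=
  MvPowerSeries.substAlgHom_X _ i

theorem cuspPullback_toMvPowerSeries (hj : 0 < j) (a : R⟦X⟧) :
    cuspPullback R k hj (a.toMvPowerSeries 0) = a.expand 2 two_ne_zero := by
  rw [PowerSeries.expand_apply]
  exact (MvPowerSeries.substAlgHom_apply _ _).trans
    (PowerSeries.subst_toMvPowerSeries (hasSubst_cuspParam hj))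

theorem span_X_pow_le_range_cuspPullback (hj : 0 < j) :
    (Ideal.span {(PowerSeries.X : R⟦X⟧) ^ (2 * k)}).restrictScalars R ≤
      LinearMap.range (cuspPullback R k hj).toLinearMap := by
  intro p hp
  obtain ⟨v, rfl⟩ := Ideal.mem_span_singleton.mp hp
  obtain ⟨a, b, rfl⟩ := exists_eq_expand_two_add_X_mul_expand_two v
  refine ⟨MvPowerSeries.X 0 ^ k * a.toMvPowerSeries 0 +
    (MvPowerSeries.X 1 - MvPowerSeries.X 0 ^ j) * b.toMvPowerSeries 0, ?_⟩
  simp only [AlgHom.toLinearMap_apply, map_add, map_sub, map_mul, map_pow, cuspPullback_X,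
    cuspPullback_toMvPowerSeries, cuspParam_zero, cuspParam_one]
  ring

variable {K : Type*} [Field K]

theorem length_quotient_range_cuspPullback_ne_top (hj : 0 < j) :
    Module.length K (K⟦X⟧ ⧸ LinearMap.range (cuspPullback K k hj).toLinearMap) ≠ ⊤ := by
  have length_le := Module.length_le_of_surjective _
    (Submodule.factor_surjective (span_X_pow_le_range_cuspPullback (R := K) (k := k) hj))
  exact ne_top_of_le_ne_top (ENat.natCast_ne_top (2 * k))
    (length_le.trans_eq (length_quotient_span_X_pow (2 * k)))

theorem exists_eq_cuspCurve_mul_add (k : ℕ) (hj : 0 < j) (h : MvPowerSeries (Fin 2) K) :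
    ∃ (q : MvPowerSeries (Fin 2) K) (a b : K⟦X⟧),
      h = (cuspCurve K j k : MvPowerSeries (Fin 2) K) * q +
        (b.toMvPowerSeries 0 * MvPowerSeries.X 1 + a.toMvPowerSeries 0) := by
  have residue_X : IsLocalRing.residue K⟦X⟧ PowerSeries.X = 0 := by
    rw [IsLocalRing.residue_eq_zero_iff, PowerSeries.maximalIdeal_eq_span_X]
    exact Ideal.mem_span_singleton_self _
  have order_eq_two :
      ((nestedEquiv K (cuspCurve K j k)).map (IsLocalRing.residue K⟦X⟧)).order = 2 := by
    simp [coe_cuspCurve, nestedEquiv_X_zero, nestedEquiv_X_one, residue_X, hj.ne']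
  obtain ⟨q, r, degree_lt, rfl⟩ := exists_eq_mul_add_eval₂_of_order_eq order_eq_two h
  have degree_le : r.degree ≤ 1 := Order.le_of_lt_succ degree_lt
  refine ⟨q, r.coeff 0, r.coeff 1, ?_⟩
  nth_rw 1 [Polynomial.eq_X_add_C_of_degree_le_one degree_le]
  simp

theorem ker_cuspPullback (hj : 0 < j) :
    RingHom.ker (cuspPullback K k hj) =
      Ideal.span {(cuspCurve K j k : MvPowerSeries (Fin 2) K)} := by
  have mem_ker : (cuspCurve K j k : MvPowerSeries (Fin 2) K) ∈ RingHom.ker (cuspPullback K k hj) :=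
    (cuspPullback_coe hj _).trans aeval_cuspParam_cuspCurve
  refine le_antisymm (fun h hh ↦ ?_) ((Ideal.span_singleton_le_iff_mem _).mpr mem_ker)
  obtain ⟨q, a, b, rfl⟩ := exists_eq_cuspCurve_mul_add k hj h
  have remainder_eq_zero : (a + PowerSeries.X ^ j * b).expand 2 two_ne_zero +
      PowerSeries.X * (PowerSeries.X ^ k * b).expand 2 two_ne_zero = 0 := by
    rw [RingHom.mem_ker, map_add, map_mul, RingHom.mem_ker.mp mem_ker] at hh
    simp only [map_add, map_mul, cuspPullback_toMvPowerSeries, cuspPullback_X, cuspParam_one] at hh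
    simp only [map_add, map_mul, map_pow, PowerSeries.expand_X]
    linear_combination hh
  obtain ⟨ha, hb⟩ := eq_zero_of_expand_two_add_X_mul_expand_two_eq_zero remainder_eq_zero
  obtain rfl : b = 0 := by simpa using hb
  obtain rfl : a = 0 := by simpa using ha
  simp [Ideal.mem_span_singleton]

end CuspCurve

section ParametrisedOrder

theorem order_X_pow_mul_of_constantCoeff_ne_zero {R : Type*} [Semiring R] (n : ℕ) {u : R⟦X⟧}
    (hu : u.constantCoeff ≠ 0) : ((PowerSeries.X : R⟦X⟧) ^ n * u).order = n := by
  refine PowerSeries.order_eq_nat.mpr ⟨?_, fun i hi ↦ ?_⟩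
  · simpa [PowerSeries.coeff_X_pow_mul'] using hu
  · rw [PowerSeries.coeff_X_pow_mul', if_neg hi.not_ge]

section

variable {R : Type*} [CommRing R]

theorem derivative_X_sq : d⁄dX R (PowerSeries.X ^ 2) = 2 * PowerSeries.X := by
  simp [Derivation.leibniz_pow]

theorem derivative_two_mul_X : d⁄dX R (2 * PowerSeries.X) = 2 := by
  rw [← map_ofNat (PowerSeries.C (R := R)), Derivation.leibniz, PowerSeries.derivative_X,
    PowerSeries.derivative_C, smul_zero, add_zero, smul_eq_mul, mul_one]

theorem exists_derivative_X_pow_succ_mul_eq (n : ℕ) (w : R⟦X⟧) :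
    ∃ u : R⟦X⟧, u.constantCoeff = (n + 1) * w.constantCoeff ∧
      d⁄dX R (PowerSeries.X ^ (n + 1) * w) = PowerSeries.X ^ n * u := by
  refine ⟨((n + 1 : ℕ) : R⟦X⟧) * w + PowerSeries.X * d⁄dX R w, by simp, ?_⟩
  simp only [Derivation.leibniz, Derivation.leibniz_pow, PowerSeries.derivative_X, smul_eq_mul,
    nsmul_eq_mul, add_tsub_cancel_right]
  ring

end

variable {K : Type*} [Field K] [CharZero K] {γ : Fin 2 → K⟦X⟧} {n : ℕ} {w : K⟦X⟧}

theorem order_paramInfl_of_eq_X_pow_mul (h₀ : γ 0 = PowerSeries.X ^ 2)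
    (h₁ : γ 1 = PowerSeries.X ^ (n + 2) * w) (hn : n ≠ 0) (hw : w.constantCoeff ≠ 0) :
    (paramInfl (d⁄dX K) γ).order = (n + 1 : ℕ) := by
  obtain ⟨u₁, hu₁, deriv_y⟩ := exists_derivative_X_pow_succ_mul_eq (n + 1) w
  obtain ⟨u₂, hu₂, deriv2_y⟩ := exists_derivative_X_pow_succ_mul_eq n u₁
  have paramInfl_eq : paramInfl (d⁄dX K) γ = PowerSeries.X ^ (n + 1) * (2 * (u₂ - u₁)) := by
    rw [paramInfl, h₀, h₁, derivative_X_sq, derivative_two_mul_X, deriv_y, deriv2_y]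
    ring
  have constantCoeff_eq : (2 * (u₂ - u₁)).constantCoeff = 2 * n * (n + 2) * w.constantCoeff := by
    rw [map_mul, map_sub, map_ofNat, hu₂, hu₁]
    push_cast
    ring
  rw [paramInfl_eq]
  refine order_X_pow_mul_of_constantCoeff_ne_zero _ (constantCoeff_eq ▸ mul_ne_zero ?_ hw)
  norm_cast
  positivity

theorem order_paramVert_of_eq_X_pow_mul (h₀ : γ 0 = PowerSeries.X ^ 2)
    (h₁ : γ 1 = PowerSeries.X ^ (n + 3) * w) (hn : n ≠ 1) (hw : w.constantCoeff ≠ 0) :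
    (paramVert (d⁄dX K) γ).order = (n + 3 : ℕ) := by
  obtain ⟨u₁, hu₁, deriv_y⟩ := exists_derivative_X_pow_succ_mul_eq (n + 2) w
  obtain ⟨u₂, hu₂, deriv2_y⟩ := exists_derivative_X_pow_succ_mul_eq (n + 1) u₁
  obtain ⟨u₃, hu₃, deriv3_y⟩ := exists_derivative_X_pow_succ_mul_eq n u₂
  have derivative_two : d⁄dX K 2 = 0 := by
    rw [← map_ofNat (PowerSeries.C (R := K)), PowerSeries.derivative_C]
  obtain ⟨v, paramVert_eq⟩ : ∃ v, paramVert (d⁄dX K) γ =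
      PowerSeries.X ^ (n + 3) * (8 * (u₃ - 3 * (u₂ - u₁)) + PowerSeries.X * v) := by
    refine ⟨PowerSeries.X ^ (2 * n + 1) * (2 * u₁ ^ 2 * u₃ - 6 * u₁ * u₂ * (u₂ - u₁)), ?_⟩
    rw [paramVert, paramInfl, h₀, h₁, derivative_X_sq, derivative_two_mul_X, derivative_two,
      deriv_y, deriv2_y, deriv3_y]
    ring
  have constantCoeff_eq : (8 * (u₃ - 3 * (u₂ - u₁)) + PowerSeries.X * v).constantCoeff =
      8 * (n + 3) * (n + 1) * (n - 1) * w.constantCoeff := by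
    simp only [map_add, map_sub, map_mul, map_ofNat, PowerSeries.constantCoeff_X, hu₃, hu₂, hu₁]
    push_cast
    ring
  rw [paramVert_eq]
  refine order_X_pow_mul_of_constantCoeff_ne_zero _ (constantCoeff_eq ▸ mul_ne_zero ?_ hw)
  refine mul_ne_zero ?_ (sub_ne_zero.mpr (mod_cast hn))
  norm_cast

end ParametrisedOrder

section InflectionsAndVertices

variable {j k : ℕ}

theorem finiteDimensional_and_interMult_cuspCurve (hj : 0 < j) {g : MvPolynomial (Fin 2) ℂ}
    {n : ℕ} (hg : (aeval (cuspParam ℂ j k) g).order = n) :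
    FiniteDimensional ℂ (MvPowerSeries (Fin 2) ℂ ⧸ Ideal.span {ι (cuspCurve ℂ j k), ι g}) ∧
      interMult (cuspCurve ℂ j k) g = n := by
  rw [← cuspPullback_coe hj] at hg
  refine finite_and_finrank_eq_of_length_eq ?_
  rw [← hg]
  exact length_quotient_span_pair_eq_order (ker_cuspPullback hj)
    (length_quotient_range_cuspPullback_ne_top hj)
    (PowerSeries.order_finite_iff_ne_zero.mp (hg ▸ ENat.natCast_lt_top n))

theorem dx_cuspCurve : dx (cuspCurve ℂ j k) =
    -(2 * (X 1 - X 0 ^ j) * (j • X 0 ^ (j - 1)) + (2 * k + 1) • X 0 ^ (2 * k)) := by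
  have dx_X_zero : pderiv 0 (X 0 : MvPolynomial (Fin 2) ℂ) = 1 := pderiv_X_self 0
  have dx_X_one : pderiv 0 (X 1 : MvPolynomial (Fin 2) ℂ) = 0 := pderiv_X_of_ne one_ne_zero
  simp only [dx, cuspCurve, map_sub, Derivation.leibniz_pow, dx_X_zero, dx_X_one,
    add_tsub_cancel_right, smul_eq_mul, nsmul_eq_mul]
  ring

theorem dy_cuspCurve : dy (cuspCurve ℂ j k) = 2 * (X 1 - X 0 ^ j) := by
  simp [dy, cuspCurve, Derivation.leibniz_pow, pderiv_X]

theorem aeval_dx_cuspCurve (hj : 0 < j) : aeval (cuspParam ℂ j k) (dx (cuspCurve ℂ j k)) =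
    -(PowerSeries.X ^ (2 * k) * d⁄dX ℂ (cuspParam ℂ j k 1)) := by
  obtain ⟨i, rfl⟩ := Nat.exists_eq_succ_of_ne_zero hj.ne'
  simp only [dx_cuspCurve, map_neg, map_add, map_sub, map_mul, map_pow, map_natCast, map_ofNat,
    aeval_X, cuspParam_zero, cuspParam_one, Derivation.leibniz_pow, PowerSeries.derivative_X,
    smul_eq_mul, nsmul_eq_mul, Nat.succ_eq_add_one, mul_add_one, add_tsub_cancel_right]
  push_cast
  ring

theorem aeval_dy_cuspCurve : aeval (cuspParam ℂ j k) (dy (cuspCurve ℂ j k)) =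
    PowerSeries.X ^ (2 * k) * d⁄dX ℂ (cuspParam ℂ j k 0) := by
  simp only [dy_cuspCurve, map_mul, map_sub, map_pow, map_ofNat, aeval_X, cuspParam_zero,
    cuspParam_one, derivative_X_sq]
  ring

theorem cuspParam_one_eq_X_pow_mul {R : Type*} [CommRing R] (hjk : j ≤ k) : cuspParam R j k 1 =
    PowerSeries.X ^ (2 * j) * (1 + PowerSeries.X ^ (2 * (k - j) + 1)) := by
  rw [cuspParam_one, mul_add, mul_one, ← pow_add]
  congr 2
  omega

theorem order_aeval_infl_cuspCurve (hj : 2 ≤ j) (hjk : j ≤ k) :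
    (aeval (cuspParam ℂ j k) (infl (cuspCurve ℂ j k))).order = (6 * k + 2 * j - 1 : ℕ) := by
  obtain ⟨n, hn⟩ : ∃ n, 2 * j = n + 2 := Nat.exists_eq_add_of_le' (by omega)
  have order_paramInfl : (paramInfl (d⁄dX ℂ) (cuspParam ℂ j k)).order = (n + 1 : ℕ) :=
    order_paramInfl_of_eq_X_pow_mul cuspParam_zero (hn ▸ cuspParam_one_eq_X_pow_mul hjk)
      (by omega) (by simp)
  rw [aeval_infl (aeval_dx_cuspCurve (by omega)) aeval_dy_cuspCurve, PowerSeries.order_neg,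
    PowerSeries.order_mul, ← pow_mul, PowerSeries.order_X_pow, order_paramInfl, ← Nat.cast_add]
  congr 1
  omega

theorem order_aeval_vert_cuspCurve (hj : 3 ≤ j) (hjk : j ≤ k) :
    (aeval (cuspParam ℂ j k) (vert (cuspCurve ℂ j k))).order = (12 * k + 2 * j : ℕ) := by
  obtain ⟨n, hn⟩ : ∃ n, 2 * j = n + 3 := Nat.exists_eq_add_of_le' (by omega)
  have order_paramVert : (paramVert (d⁄dX ℂ) (cuspParam ℂ j k)).order = (n + 3 : ℕ) :=
    order_paramVert_of_eq_X_pow_mul cuspParam_zero (hn ▸ cuspParam_one_eq_X_pow_mul hjk)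
      (by omega) (by simp)
  rw [aeval_vert (aeval_dx_cuspCurve (by omega)) aeval_dy_cuspCurve, PowerSeries.order_mul,
    ← pow_mul, PowerSeries.order_X_pow, order_paramVert, ← Nat.cast_add]
  congr 1
  omega

end InflectionsAndVertices

/-- **Intermediate values for the `A_{2k}`-singularity (Theorem 4.4, Table 1).**
For the curve `(Y − X^j)² = X^(2k+1)` with `2 ≤ j ≤ k`, one has `I_f = 6k + 2j − 1`,
and if moreover `3 ≤ j` then `V_f = 12k + 2j`. -/
theorem inflection_vertex_numbers_A2k
    (k j : ℕ) (hj : 2 ≤ j) (hjk : j ≤ k) :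
    (FiniteDimensional ℂ (MvPowerSeries (Fin 2) ℂ ⧸
        Ideal.span {ι ((MvPolynomial.X 1 - MvPolynomial.X 0 ^ j) ^ 2 -
            MvPolynomial.X 0 ^ (2 * k + 1)),
          ι (infl ((MvPolynomial.X 1 - MvPolynomial.X 0 ^ j) ^ 2 -
            MvPolynomial.X 0 ^ (2 * k + 1)))}) ∧
      interMult ((MvPolynomial.X 1 - MvPolynomial.X 0 ^ j) ^ 2 -
          MvPolynomial.X 0 ^ (2 * k + 1))
        (infl ((MvPolynomial.X 1 - MvPolynomial.X 0 ^ j) ^ 2 -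
          MvPolynomial.X 0 ^ (2 * k + 1)))
        = 6 * k + 2 * j - 1) ∧
    (3 ≤ j →
      FiniteDimensional ℂ (MvPowerSeries (Fin 2) ℂ ⧸
        Ideal.span {ι ((MvPolynomial.X 1 - MvPolynomial.X 0 ^ j) ^ 2 -
            MvPolynomial.X 0 ^ (2 * k + 1)),
          ι (vert ((MvPolynomial.X 1 - MvPolynomial.X 0 ^ j) ^ 2 -
            MvPolynomial.X 0 ^ (2 * k + 1)))}) ∧
      interMult ((MvPolynomial.X 1 - MvPolynomial.X 0 ^ j) ^ 2 -
          MvPolynomial.X 0 ^ (2 * k + 1))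
        (vert ((MvPolynomial.X 1 - MvPolynomial.X 0 ^ j) ^ 2 -
          MvPolynomial.X 0 ^ (2 * k + 1)))
        = 12 * k + 2 * j) := by
  exact ⟨finiteDimensional_and_interMult_cuspCurve (by omega) (order_aeval_infl_cuspCurve hj hjk),
    fun hj₃ ↦ finiteDimensional_and_interMult_cuspCurve (by omega)
      (order_aeval_vert_cuspCurve hj₃ hjk)⟩
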